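/- With notation as in the paper, the projection to S³H⊗Λ³E of ω_E• sym^H(ω_H•𝒯(γ₀⊗α₀)) equals −(6(n−1)/(4n−3)) sym^H(hhh̃)⊗(eᵢ∧ẽᵢ∧e₂) − (4(4n²−3n+3)/(4n−3)) sym^H(hhh̃)⊗(e₁∧e₂∧ẽ₁), where the sum over i = 1..2n is implicit. -/

import Mathlib

open scoped BigOperators TensorProduct

/-- wedge of two vectors in the exterior algebra -/
noncomputable def wedge2 {T : Type*} [AddCommGroup T] [Module ℂ T] (x₁ x₂ : T) :
    ExteriorAlgebra ℂ T :=
  ExteriorAlgebra.ι ℂ x₁ * ExteriorAlgebra.ι ℂ x₂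

/-- wedge of three vectors in the exterior algebra -/
noncomputable def wedge3 {T : Type*} [AddCommGroup T] [Module ℂ T] (x₁ x₂ x₃ : T) :
    ExteriorAlgebra ℂ T :=
  ExteriorAlgebra.ι ℂ x₁ * ExteriorAlgebra.ι ℂ x₂ * ExteriorAlgebra.ι ℂ x₃

/-- wedge of four vectors in the exterior algebra -/
noncomputable def wedge4 {T : Type*} [AddCommGroup T] [Module ℂ T] (x₁ x₂ x₃ x₄ : T) :
    ExteriorAlgebra ℂ T :=
  ExteriorAlgebra.ι ℂ x₁ * ExteriorAlgebra.ι ℂ x₂ * ExteriorAlgebra.ι ℂ x₃ *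
    ExteriorAlgebra.ι ℂ x₄

/-- the element `α₀ = e₁h∧e₂h∧Σᵢ eᵢh̃∧ẽᵢh̃ − e₁h̃∧e₂h̃∧Σᵢ eᵢh∧ẽᵢh` -/
noncomputable def alpha0 (n : ℕ) (hn : 2 ≤ n) {E H : Type*}
    [AddCommGroup E] [Module ℂ E] [AddCommGroup H] [Module ℂ H]
    (e te : Fin n ⊕ Fin n → E) (h th : H) : ExteriorAlgebra ℂ (E ⊗[ℂ] H) :=
  (∑ i : Fin n ⊕ Fin n,
      wedge4 (e (Sum.inl ⟨0, by omega⟩) ⊗ₜ h) (e (Sum.inl ⟨1, by omega⟩) ⊗ₜ h)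
        (e i ⊗ₜ th) (te i ⊗ₜ th))
  - ∑ i : Fin n ⊕ Fin n,
      wedge4 (e (Sum.inl ⟨0, by omega⟩) ⊗ₜ th) (e (Sum.inl ⟨1, by omega⟩) ⊗ₜ th)
        (e i ⊗ₜ h) (te i ⊗ₜ h)

/-- the value `𝒯(γ₀⊗α₀)(X) = (4/5)⟨γ₀,X⟩α₀ + (1/5)γ₀∧i_Xα₀ − (1/(4n−3))X∧i_{γ₀}α₀` -/
noncomputable def Tcal (n : ℕ) {E H : Type*}
    [AddCommGroup E] [Module ℂ E] [AddCommGroup H] [Module ℂ H]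
    (B : E ⊗[ℂ] H →ₗ[ℂ] E ⊗[ℂ] H →ₗ[ℂ] ℂ)
    (ic : E ⊗[ℂ] H →ₗ[ℂ]
      ExteriorAlgebra ℂ (E ⊗[ℂ] H) →ₗ[ℂ] ExteriorAlgebra ℂ (E ⊗[ℂ] H))
    (γ0 : E ⊗[ℂ] H) (α0 : ExteriorAlgebra ℂ (E ⊗[ℂ] H)) (X : E ⊗[ℂ] H) :
    ExteriorAlgebra ℂ (E ⊗[ℂ] H) :=
  ((4 : ℂ)/5) • (B γ0 X • α0) + ((1 : ℂ)/5) • (ExteriorAlgebra.ι ℂ γ0 * ic X α0)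
    - ((1 : ℂ)/(4*n - 3)) • (ExteriorAlgebra.ι ℂ X * ic γ0 α0)

/-- the 1-form `𝒯(γ₀⊗α₀)` as an element of `T ⊗ Λ⁴T` via the metric duality
(the dual basis of `{eᵢ⊗h, eᵢ⊗h̃}` is `{ẽᵢ⊗h̃, −ẽᵢ⊗h}`) -/
noncomputable def Xi (n : ℕ) {E H : Type*}
    [AddCommGroup E] [Module ℂ E] [AddCommGroup H] [Module ℂ H]
    (e te : Fin n ⊕ Fin n → E) (h th : H)
    (B : E ⊗[ℂ] H →ₗ[ℂ] E ⊗[ℂ] H →ₗ[ℂ] ℂ)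
    (ic : E ⊗[ℂ] H →ₗ[ℂ]
      ExteriorAlgebra ℂ (E ⊗[ℂ] H) →ₗ[ℂ] ExteriorAlgebra ℂ (E ⊗[ℂ] H))
    (γ0 : E ⊗[ℂ] H) (α0 : ExteriorAlgebra ℂ (E ⊗[ℂ] H)) :
    (E ⊗[ℂ] H) ⊗[ℂ] ExteriorAlgebra ℂ (E ⊗[ℂ] H) :=
  ∑ i : Fin n ⊕ Fin n,
    ((te i ⊗ₜ th) ⊗ₜ Tcal n B ic γ0 α0 (e i ⊗ₜ h)
      - (te i ⊗ₜ h) ⊗ₜ Tcal n B ic γ0 α0 (e i ⊗ₜ th))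

/-- total symmetrization (average) of three vectors in `H⊗H⊗H` -/
noncomputable def sym3 {H : Type*} [AddCommGroup H] [Module ℂ H] (u v w : H) :
    H ⊗[ℂ] (H ⊗[ℂ] H) :=
  ((1:ℂ)/6) • (u ⊗ₜ (v ⊗ₜ w) + u ⊗ₜ (w ⊗ₜ v) + v ⊗ₜ (u ⊗ₜ w)
    + v ⊗ₜ (w ⊗ₜ u) + w ⊗ₜ (u ⊗ₜ v) + w ⊗ₜ (v ⊗ₜ u))

/-- total antisymmetrization of three vectors in `E⊗E⊗E` (the representative of
the 3-vector `x∧y∧z`) -/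
noncomputable def alt3 {E : Type*} [AddCommGroup E] [Module ℂ E] (x y z : E) :
    E ⊗[ℂ] (E ⊗[ℂ] E) :=
  x ⊗ₜ (y ⊗ₜ z) - x ⊗ₜ (z ⊗ₜ y) - y ⊗ₜ (x ⊗ₜ z)
    + y ⊗ₜ (z ⊗ₜ x) + z ⊗ₜ (x ⊗ₜ y) - z ⊗ₜ (y ⊗ₜ x)

section Helpers
variable {E H M : Type*} [AddCommGroup E] [Module ℂ E] [AddCommGroup H] [Module ℂ H]
  [AddCommGroup M] [Module ℂ M]

theorem alt3_swap12 (x y z : E) : alt3 y x z = - alt3 x y z := by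
  unfold alt3; abel

theorem alt3_swap23 (x y z : E) : alt3 x z y = - alt3 x y z := by
  unfold alt3; abel

theorem alt3_add3 (x y z z' : E) : alt3 x y (z + z') = alt3 x y z + alt3 x y z' := by
  simp only [alt3, TensorProduct.tmul_add, TensorProduct.add_tmul]; abel

theorem alt3_smul3 (c : ℂ) (x y z : E) : alt3 x y (c • z) = c • alt3 x y z := by
  simp only [alt3, TensorProduct.tmul_smul, ← TensorProduct.smul_tmul']; module

theorem alt3_neg3 (x y z : E) : alt3 x y (-z) = - alt3 x y z := by
  have := alt3_smul3 (-1) x y z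
  simpa using this

theorem alt3_sub3 (x y z z' : E) : alt3 x y (z - z') = alt3 x y z - alt3 x y z' := by
  rw [sub_eq_add_neg, alt3_add3, alt3_neg3, sub_eq_add_neg]

theorem alt3_neg2 (x y z : E) : alt3 x (-y) z = - alt3 x y z := by
  rw [alt3_swap23 x z, alt3_neg3, alt3_swap23 x y]; simp

theorem alt3_neg1 (x y z : E) : alt3 (-x) y z = - alt3 x y z := by
  rw [alt3_swap12 y, alt3_neg2, alt3_swap12 x]; simp

theorem alt3_same12 (x y : E) : alt3 x x y = 0 := by
  unfold alt3; abel

theorem alt3_same23 (x y : E) : alt3 x y y = 0 := by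
  unfold alt3; abel

theorem alt3_same13 (x y : E) : alt3 x y x = 0 := by
  unfold alt3; abel

theorem sym3_a (u v w : H) : sym3 u w v = sym3 u v w := by
  unfold sym3; congr 1; abel

theorem sym3_b (u v w : H) : sym3 v u w = sym3 u v w := by
  unfold sym3; congr 1; abel

/-- contraction of a three-vector -/
noncomputable def ctr (ωE : E →ₗ[ℂ] E →ₗ[ℂ] ℂ) (x y z : E) : E :=
  ωE x y • z - ωE x z • y + ωE y z • x

theorem G34 (ωE : E →ₗ[ℂ] E →ₗ[ℂ] ℂ) (hωEskew : ∀ u v : E, ωE u v = - ωE v u)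
    (G3 : E ⊗[ℂ] (E ⊗[ℂ] ((H ⊗[ℂ] (H ⊗[ℂ] H)) ⊗[ℂ] (E ⊗[ℂ] (E ⊗[ℂ] E)))) →ₗ[ℂ]
      E ⊗[ℂ] (E ⊗[ℂ] ((H ⊗[ℂ] (H ⊗[ℂ] H)) ⊗[ℂ] E)))
    (hG3 : ∀ (a a' x y z : E) (u v w : H),
      G3 (a ⊗ₜ (a' ⊗ₜ ((u ⊗ₜ (v ⊗ₜ w)) ⊗ₜ (x ⊗ₜ (y ⊗ₜ z)))))
        = a ⊗ₜ (a' ⊗ₜ ((u ⊗ₜ (v ⊗ₜ w)) ⊗ₜ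
            (ωE x y • z - ωE x z • y + ωE y z • x))))
    (G4 : E ⊗[ℂ] (E ⊗[ℂ] ((H ⊗[ℂ] (H ⊗[ℂ] H)) ⊗[ℂ] E)) →ₗ[ℂ]
      (H ⊗[ℂ] (H ⊗[ℂ] H)) ⊗[ℂ] (E ⊗[ℂ] (E ⊗[ℂ] E)))
    (hG4 : ∀ (a a' z : E) (u v w : H),
      G4 (a ⊗ₜ (a' ⊗ₜ ((u ⊗ₜ (v ⊗ₜ w)) ⊗ₜ z)))
        = (u ⊗ₜ (v ⊗ₜ w)) ⊗ₜ (((1:ℂ)/6) • alt3 a a' z))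
    (a a' x y z : E) (u v w : H) :
    G4 (G3 (a ⊗ₜ (a' ⊗ₜ (sym3 u v w ⊗ₜ alt3 x y z))))
      = sym3 u v w ⊗ₜ alt3 a a' (ctr ωE x y z) := by
  have key : ∀ u v w : H, G4 (G3 (a ⊗ₜ (a' ⊗ₜ ((u ⊗ₜ (v ⊗ₜ w)) ⊗ₜ alt3 x y z))))
      = (u ⊗ₜ (v ⊗ₜ w)) ⊗ₜ alt3 a a' (ctr ωE x y z) := by
    intro u v w
    obtain ⟨L, hL⟩ : ∃ L : (E ⊗[ℂ] (E ⊗[ℂ] E)) →ₗ[ℂ] (H ⊗[ℂ] (H ⊗[ℂ] H)) ⊗[ℂ] (E ⊗[ℂ] (E ⊗[ℂ] E)),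
        ∀ t, G4 (G3 (a ⊗ₜ (a' ⊗ₜ ((u ⊗ₜ (v ⊗ₜ w)) ⊗ₜ t)))) = L t :=
      ⟨G4 ∘ₗ G3 ∘ₗ TensorProduct.mk ℂ _ _ a ∘ₗ TensorProduct.mk ℂ _ _ a' ∘ₗ
        TensorProduct.mk ℂ _ _ (u ⊗ₜ (v ⊗ₜ w)), fun t => rfl⟩
    have hL2 : ∀ x y z : E, L (x ⊗ₜ (y ⊗ₜ z)) =
        ((1:ℂ)/6) • ((u ⊗ₜ (v ⊗ₜ w)) ⊗ₜ alt3 a a' (ctr ωE x y z)) := by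
      intro x y z
      rw [← hL, hG3, hG4, TensorProduct.tmul_smul]; rfl
    have c1 : ctr ωE x z y = (-1 : ℂ) • ctr ωE x y z := by
      simp only [ctr]; rw [hωEskew z y]; module
    have c2 : ctr ωE y x z = (-1 : ℂ) • ctr ωE x y z := by
      simp only [ctr]; rw [hωEskew y x]; module
    have c3 : ctr ωE y z x = ctr ωE x y z := by
      simp only [ctr]; rw [hωEskew y x, hωEskew z x]; module
    have c4 : ctr ωE z x y = ctr ωE x y z := by
      simp only [ctr]; rw [hωEskew z x, hωEskew z y]; module
    have c5 : ctr ωE z y x = (-1 : ℂ) • ctr ωE x y z := by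
      simp only [ctr]; rw [hωEskew z y, hωEskew z x, hωEskew y x]; module
    rw [hL, alt3]
    simp only [map_add, map_sub, hL2, c1, c2, c3, c4, c5, alt3_smul3, TensorProduct.tmul_smul]
    generalize (u ⊗ₜ[ℂ] (v ⊗ₜ[ℂ] w)) ⊗ₜ[ℂ] alt3 a a' (ctr ωE x y z) = t
    module
  obtain ⟨L, hL⟩ : ∃ L : (H ⊗[ℂ] (H ⊗[ℂ] H)) →ₗ[ℂ] (H ⊗[ℂ] (H ⊗[ℂ] H)) ⊗[ℂ] (E ⊗[ℂ] (E ⊗[ℂ] E)),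
      ∀ t, G4 (G3 (a ⊗ₜ (a' ⊗ₜ (t ⊗ₜ alt3 x y z)))) = L t :=
    ⟨G4 ∘ₗ G3 ∘ₗ TensorProduct.mk ℂ _ _ a ∘ₗ TensorProduct.mk ℂ _ _ a' ∘ₗ
      (TensorProduct.mk ℂ _ _).flip (alt3 x y z), fun t => rfl⟩
  obtain ⟨L', hL'⟩ : ∃ L : (H ⊗[ℂ] (H ⊗[ℂ] H)) →ₗ[ℂ] (H ⊗[ℂ] (H ⊗[ℂ] H)) ⊗[ℂ] (E ⊗[ℂ] (E ⊗[ℂ] E)),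
      ∀ t, t ⊗ₜ alt3 a a' (ctr ωE x y z) = L t :=
    ⟨(TensorProduct.mk ℂ _ _).flip (alt3 a a' (ctr ωE x y z)), fun t => rfl⟩
  have key2 : ∀ u v w : H, L (u ⊗ₜ (v ⊗ₜ w)) = L' (u ⊗ₜ (v ⊗ₜ w)) := by
    intro u v w
    rw [← hL, ← hL', key]
  rw [hL, hL', sym3]
  simp only [map_smul, map_add, key2]

theorem core
    (n : ℕ) (hn : 2 ≤ n)
    (ωE : E →ₗ[ℂ] E →ₗ[ℂ] ℂ) (hωEskew : ∀ u v : E, ωE u v = - ωE v u)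
    (ωH : H →ₗ[ℂ] H →ₗ[ℂ] ℂ) (hωHskew : ∀ u v : H, ωH u v = - ωH v u)
    (e te : Fin n ⊕ Fin n → E)
    (hte1 : ∀ i : Fin n, te (Sum.inl i) = e (Sum.inr i))
    (hte2 : ∀ i : Fin n, te (Sum.inr i) = - e (Sum.inl i))
    (hunit : ∀ i j : Fin n ⊕ Fin n, ωE (e i) (te j) = if i = j then 1 else 0)
    (h th : H) (hH1 : ωH h th = 1) (hH2 : ωH h h = 0) (hH3 : ωH th th = 0)
    (B : E ⊗[ℂ] H →ₗ[ℂ] E ⊗[ℂ] H →ₗ[ℂ] ℂ)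
    (hB : ∀ (a b : E) (c d : H), B (a ⊗ₜ c) (b ⊗ₜ d) = ωE a b * ωH c d)
    (ic : E ⊗[ℂ] H →ₗ[ℂ]
      ExteriorAlgebra ℂ (E ⊗[ℂ] H) →ₗ[ℂ] ExteriorAlgebra ℂ (E ⊗[ℂ] H))
    (hic : ∀ γ x₁ x₂ x₃ x₄ : E ⊗[ℂ] H,
      ic γ (wedge4 x₁ x₂ x₃ x₄)
        = B γ x₁ • wedge3 x₂ x₃ x₄ - B γ x₂ • wedge3 x₁ x₃ x₄
          + B γ x₃ • wedge3 x₁ x₂ x₄ - B γ x₄ • wedge3 x₁ x₂ x₃)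
    (F : E → H → ExteriorAlgebra ℂ (E ⊗[ℂ] H) →ₗ[ℂ] M)
    (A : H → H → H → E → E → E → M)
    (hF : ∀ (a₀ a₁ a₂ a₃ a₄ : E) (c₀ c₁ c₂ c₃ c₄ : H),
      F a₀ c₀ (wedge4 (a₁ ⊗ₜ c₁) (a₂ ⊗ₜ c₂) (a₃ ⊗ₜ c₃) (a₄ ⊗ₜ c₄))
        = ωH c₀ c₁ • A c₂ c₃ c₄ a₀ a₁ (ctr ωE a₂ a₃ a₄)
        - ωH c₀ c₂ • A c₁ c₃ c₄ a₀ a₂ (ctr ωE a₁ a₃ a₄)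
        + ωH c₀ c₃ • A c₁ c₂ c₄ a₀ a₃ (ctr ωE a₁ a₂ a₄)
        - ωH c₀ c₄ • A c₁ c₂ c₃ a₀ a₄ (ctr ωE a₁ a₂ a₃))
    (D : E → E → E → M) (hA1 : A h h th = D) (hA2 : A h th h = D) (hA3 : A th h h = D)
    (d12 : ∀ x y z, D y x z = - D x y z) (d23 : ∀ x y z, D x z y = - D x y z)
    (dadd : ∀ x y z z', D x y (z + z') = D x y z + D x y z')
    (dsmul : ∀ (c : ℂ) x y z, D x y (c • z) = c • D x y z) :
    ∑ i : Fin n ⊕ Fin n,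
      (F (te i) th (Tcal n B ic (te (Sum.inl ⟨0, by omega⟩) ⊗ₜ h) (alpha0 n hn e te h th) (e i ⊗ₜ h))
      - F (te i) h (Tcal n B ic (te (Sum.inl ⟨0, by omega⟩) ⊗ₜ h) (alpha0 n hn e te h th) (e i ⊗ₜ th)))
      = (-(6*((n:ℂ)-1))/(4*n-3)) •
          ∑ i : Fin n ⊕ Fin n, D (e i) (te i) (e (Sum.inl ⟨1, by omega⟩))
        + (-(4*(4*(n:ℂ)^2-3*n+3))/(4*n-3)) •
            D (e (Sum.inl ⟨0, by omega⟩))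
              (e (Sum.inl ⟨1, by omega⟩)) (te (Sum.inl ⟨0, by omega⟩)) := by
  have dneg3 : ∀ x y z, D x y (-z) = - D x y z := fun x y z => by
    simpa using dsmul (-1) x y z
  have dsub : ∀ x y z z', D x y (z - z') = D x y z - D x y z' := fun x y z z' => by
    rw [sub_eq_add_neg, dadd, dneg3, sub_eq_add_neg]
  have dneg2 : ∀ x y z, D x (-y) z = - D x y z := fun x y z => by
    rw [d23 x z, dneg3, d23 x y]; simp
  have dneg1 : ∀ x y z, D (-x) y z = - D x y z := fun x y z => by
    rw [d12 y, dneg2, d12 x]; simp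
  have d0 : ∀ x y, D x y 0 = 0 := fun x y => by simpa using dsmul 0 x y 0
  have two : ∀ m : M, m = -m → m = 0 := fun m hm => by
    have : (2:ℂ) • m = 0 := by rw [two_smul]; nth_rewrite 2 [hm]; simp
    simpa using this
  have s12 : ∀ x z, D x x z = 0 := fun x z => two _ (d12 x x z)
  have s23 : ∀ x z, D x z z = 0 := fun x z => two _ (d23 x z z)
  have s13 : ∀ x z, D x z x = 0 := fun x z => by rw [d23 x x z, s12, neg_zero]
  have dif : ∀ (p : Prop) [Decidable p] x y a b,
      D x y (if p then a else b) = if p then D x y a else D x y b := by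
    intro p _ x y a b; split_ifs <;> rfl
  have sif : ∀ (p : Prop) [Decidable p] (f : Fin n → M),
      (∑ x, if p then f x else 0) = if p then ∑ x, f x else 0 := by
    intro p _ f; split_ifs <;> simp
  have hH4 : ωH th h = -1 := by rw [hωHskew, hH1]
  have o1 : ∀ i j, ωE (e (Sum.inl i)) (e (Sum.inr j)) = if i = j then 1 else 0 := fun i j => by
    rw [← hte1, hunit]; simp
  have o2 : ∀ i j, ωE (e (Sum.inr j)) (e (Sum.inl i)) = if i = j then -1 else 0 := fun i j => by
    rw [hωEskew, o1]; split_ifs <;> simp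
  have o3 : ∀ i j, ωE (e (Sum.inl i)) (e (Sum.inl j)) = 0 := fun i j => by
    have := hunit (Sum.inl i) (Sum.inr j)
    rw [hte2] at this
    simpa using this
  have o4 : ∀ i j, ωE (e (Sum.inr i)) (e (Sum.inr j)) = 0 := fun i j => by
    have := hunit (Sum.inr i) (Sum.inl j)
    rw [hte1] at this
    simpa using this
  have hw : ∀ x x₁ x₂ x₃ : E ⊗[ℂ] H, ExteriorAlgebra.ι ℂ x * wedge3 x₁ x₂ x₃ = wedge4 x x₁ x₂ x₃ := by
    intro x x₁ x₂ x₃; simp only [wedge3, wedge4, mul_assoc]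
  have hz : (⟨1, by omega⟩ : Fin n) ≠ ⟨0, by omega⟩ := by simp
  have hα : alpha0 n hn e te h th = (∑ i : Fin n ⊕ Fin n,
      wedge4 (e (Sum.inl ⟨0, by omega⟩) ⊗ₜ h) (e (Sum.inl ⟨1, by omega⟩) ⊗ₜ h)
        (e i ⊗ₜ th) (te i ⊗ₜ th))
      - ∑ i : Fin n ⊕ Fin n,
      wedge4 (e (Sum.inl ⟨0, by omega⟩) ⊗ₜ th) (e (Sum.inl ⟨1, by omega⟩) ⊗ₜ th)
        (e i ⊗ₜ h) (te i ⊗ₜ h) := rfl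
  generalize alpha0 n hn e te h th = α at *
  generalize (⟨0, _⟩ : Fin n) = z0 at *
  generalize (⟨1, _⟩ : Fin n) = z1 at *
  have hz' := hz.symm
  have m1 : ∀ x y z, D (e (Sum.inr x)) (e (Sum.inl y)) z = - D (e (Sum.inl y)) (e (Sum.inr x)) z :=
    fun x y z => d12 _ _ _
  have m2 : ∀ x y z, D z (e (Sum.inr x)) (e (Sum.inl y)) = - D z (e (Sum.inl y)) (e (Sum.inr x)) :=
    fun x y z => d23 _ _ _
  have m3 : ∀ x z, D (e (Sum.inl z1)) (e (Sum.inl x)) z = - D (e (Sum.inl x)) (e (Sum.inl z1)) z :=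
    fun x z => d12 _ _ _
  have P1 : ∑ i : Fin n ⊕ Fin n, (F (te i) th (B (te (Sum.inl z0) ⊗ₜ h) (e i ⊗ₜ h) • α)
      - F (te i) h (B (te (Sum.inl z0) ⊗ₜ h) (e i ⊗ₜ th) • α)) =
      (-(4 * n : ℂ)) • D (e (Sum.inl z0)) (e (Sum.inl z1)) (te (Sum.inl z0)) := by
    simp only [hB, hH2, hH1, mul_zero, mul_one, zero_smul, map_zero, zero_sub, hte1,
      Fintype.sum_sum_type, o2, o4, map_smul, neg_smul, ite_smul, zero_smul, hte2]
    simp only [hα, map_sum, map_sub, map_add, map_smul, hF, hH1, hH2, hH3, hH4, hA1, hA2, hA3,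
      ctr, hte1, hte2, Fintype.sum_sum_type, o1, o2, o3, o4, map_neg, LinearMap.neg_apply,
      dadd, dsub, dsmul, dneg1, dneg2, dneg3, dif, s12, s13, s23, d0,
      zero_smul, smul_zero, neg_zero, sub_zero, zero_sub, add_zero, zero_add, one_smul, neg_smul,
      ite_smul, smul_ite, smul_neg, neg_neg,
      Finset.sum_add_distrib, Finset.sum_sub_distrib, Finset.sum_neg_distrib, Finset.sum_const_zero,
      Finset.sum_ite_eq, Finset.sum_ite_eq', Finset.mem_univ, if_true, hz, hz', if_false,
      Finset.sum_const, Finset.card_univ, Fintype.card_fin]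
    simp only [m1, m2, m3, s12, s23, s13, Finset.sum_neg_distrib, neg_neg, neg_zero]
    match_scalars <;> ring
  have P2 : ∑ i : Fin n ⊕ Fin n,
      (F (te i) th (ExteriorAlgebra.ι ℂ (te (Sum.inl z0) ⊗ₜ h) * ic (e i ⊗ₜ h) α)
      - F (te i) h (ExteriorAlgebra.ι ℂ (te (Sum.inl z0) ⊗ₜ h) * ic (e i ⊗ₜ th) α)) =
      (-(4 * n : ℂ)) • D (e (Sum.inl z0)) (e (Sum.inl z1)) (te (Sum.inl z0)) := by
    simp only [hα, map_sum, map_sub, map_add, map_smul, map_neg, hic, hB, hH1, hH2, hH3, hH4,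
      mul_zero, mul_one, mul_neg, zero_smul, sub_zero, zero_sub, add_zero, zero_add, mul_add, mul_sub,
      Finset.mul_sum, neg_zero, neg_smul, Algebra.mul_smul_comm, hw, hF, hA1, hA2, hA3,
      ctr, hte1, hte2, Fintype.sum_sum_type, o1, o2, o3, o4, LinearMap.neg_apply,
      dadd, dsub, dsmul, dneg1, dneg2, dneg3, dif, s12, s13, s23, d0,
      smul_zero, one_smul,
      ite_smul, smul_ite, smul_neg, neg_neg,
      Finset.sum_add_distrib, Finset.sum_sub_distrib, Finset.sum_neg_distrib, Finset.sum_const_zero, sif,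
      Finset.sum_ite_eq, Finset.sum_ite_eq', Finset.mem_univ, if_true, hz, hz', if_false,
      Finset.sum_const, Finset.card_univ, Fintype.card_fin]
    simp only [m1, m2, m3, s12, s23, s13, Finset.sum_neg_distrib, neg_neg, neg_zero, smul_neg,
      ← Finset.smul_sum, Finset.sum_add_distrib, Finset.sum_sub_distrib]
    match_scalars <;> ring
  have P3 : ∑ i : Fin n ⊕ Fin n,
      (F (te i) th (ExteriorAlgebra.ι ℂ (e i ⊗ₜ h) * ic (te (Sum.inl z0) ⊗ₜ h) α)
      - F (te i) h (ExteriorAlgebra.ι ℂ (e i ⊗ₜ th) * ic (te (Sum.inl z0) ⊗ₜ h) α)) =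
      (6*((n:ℂ)-1)) • ∑ i : Fin n ⊕ Fin n, D (e i) (te i) (e (Sum.inl z1))
       + (12 : ℂ) • D (e (Sum.inl z0)) (e (Sum.inl z1)) (te (Sum.inl z0)) := by
    simp only [hα, map_sum, map_sub, map_add, map_smul, map_neg, hic, hB, hH1, hH2, hH3, hH4,
      mul_zero, mul_one, mul_neg, zero_smul, sub_zero, zero_sub, add_zero, zero_add, mul_add, mul_sub,
      Finset.mul_sum, neg_zero, neg_smul, Algebra.mul_smul_comm, hw, hF, hA1, hA2, hA3,
      ctr, hte1, hte2, Fintype.sum_sum_type, o1, o2, o3, o4, LinearMap.neg_apply,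
      dadd, dsub, dsmul, dneg1, dneg2, dneg3, dif, s12, s13, s23, d0,
      smul_zero, one_smul,
      ite_smul, smul_ite, smul_neg, neg_neg,
      Finset.sum_add_distrib, Finset.sum_sub_distrib, Finset.sum_neg_distrib, Finset.sum_const_zero, sif,
      Finset.sum_ite_eq, Finset.sum_ite_eq', Finset.mem_univ, if_true, hz, hz', if_false,
      Finset.sum_const, Finset.card_univ, Fintype.card_fin]
    simp only [m1, m2, m3, s12, s23, s13, Finset.sum_neg_distrib, neg_neg, neg_zero, smul_neg,
      ← Finset.smul_sum, Finset.sum_add_distrib, Finset.sum_sub_distrib]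
    match_scalars <;> ring
  have hne : (4 * (n:ℂ) - 3) ≠ 0 := by
    intro h0
    have : ((4 * n : ℕ) : ℂ) = (3 : ℕ) := by push_cast; linear_combination h0
    have := Nat.cast_injective this
    omega
  have comb : ∀ X Y Z : E ⊗[ℂ] H → ExteriorAlgebra ℂ (E ⊗[ℂ] H), ∀ p q r : ℂ,
      ∑ i : Fin n ⊕ Fin n, (F (te i) th (p • X (e i ⊗ₜ h) + q • Y (e i ⊗ₜ h) - r • Z (e i ⊗ₜ h))
        - F (te i) h (p • X (e i ⊗ₜ th) + q • Y (e i ⊗ₜ th) - r • Z (e i ⊗ₜ th)))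
      = p • ∑ i : Fin n ⊕ Fin n, (F (te i) th (X (e i ⊗ₜ h)) - F (te i) h (X (e i ⊗ₜ th)))
       + q • ∑ i : Fin n ⊕ Fin n, (F (te i) th (Y (e i ⊗ₜ h)) - F (te i) h (Y (e i ⊗ₜ th)))
       - r • ∑ i : Fin n ⊕ Fin n, (F (te i) th (Z (e i ⊗ₜ h)) - F (te i) h (Z (e i ⊗ₜ th))) := by
    intro X Y Z p q r
    simp only [Finset.smul_sum, ← Finset.sum_add_distrib, ← Finset.sum_sub_distrib]
    refine Finset.sum_congr rfl fun i _ => ?_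
    simp only [map_add, map_sub, map_smul]
    module
  have hc := comb (fun X => B (te (Sum.inl z0) ⊗ₜ h) X • α)
    (fun X => ExteriorAlgebra.ι ℂ (te (Sum.inl z0) ⊗ₜ h) * ic X α)
    (fun X => ExteriorAlgebra.ι ℂ X * ic (te (Sum.inl z0) ⊗ₜ h) α) (4/5) (1/5) (1/(4*n-3))
  simp only [Tcal]
  refine hc.trans ?_
  rw [P1, P2, P3]
  generalize ∑ i : Fin n ⊕ Fin n, D (e i) (te i) (e (Sum.inl z1)) = S
  match_scalars <;> field_simp <;> ring

end Helpers

set_option maxHeartbeats 2000000 in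
/-- the projection to `S³H⊗Λ³E` of `ω_E• sym^H(ω_H•𝒯(γ₀⊗α₀))`
equals `−(6(n−1)/(4n−3)) sym^H(hhh̃)⊗(Σᵢ eᵢ∧ẽᵢ∧e₂) − (4(4n²−3n+3)/(4n−3))
sym^H(hhh̃)⊗(e₁∧e₂∧ẽ₁)`.  Conventions as in Statements 11–13; `G1` is the
`ω_H`-contraction of the first two `H`-variables, `G2` the expansion of `Λ³T`
followed by total symmetrization in the `H`-variables, `G3` the `ω_E`-contraction
on `Λ³E`, and `G4` the final skew-symmetrization of the three `E`-variables. -/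
theorem statement_14
    (n : ℕ) (hn : 2 ≤ n)
    (E H : Type*) [AddCommGroup E] [Module ℂ E] [AddCommGroup H] [Module ℂ H]
    (ωE : E →ₗ[ℂ] E →ₗ[ℂ] ℂ) (hωEskew : ∀ u v : E, ωE u v = - ωE v u)
    (ωH : H →ₗ[ℂ] H →ₗ[ℂ] ℂ) (hωHskew : ∀ u v : H, ωH u v = - ωH v u)
    (e te : Fin n ⊕ Fin n → E)
    (hte1 : ∀ i : Fin n, te (Sum.inl i) = e (Sum.inr i))
    (hte2 : ∀ i : Fin n, te (Sum.inr i) = - e (Sum.inl i))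
    (hunit : ∀ i j : Fin n ⊕ Fin n, ωE (e i) (te j) = if i = j then 1 else 0)
    (h th : H) (hH1 : ωH h th = 1) (hH2 : ωH h h = 0) (hH3 : ωH th th = 0)
    (B : E ⊗[ℂ] H →ₗ[ℂ] E ⊗[ℂ] H →ₗ[ℂ] ℂ)
    (hB : ∀ (a b : E) (c d : H), B (a ⊗ₜ c) (b ⊗ₜ d) = ωE a b * ωH c d)
    (ic : E ⊗[ℂ] H →ₗ[ℂ]
      ExteriorAlgebra ℂ (E ⊗[ℂ] H) →ₗ[ℂ] ExteriorAlgebra ℂ (E ⊗[ℂ] H))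
    (hic : ∀ γ x₁ x₂ x₃ x₄ : E ⊗[ℂ] H,
      ic γ (wedge4 x₁ x₂ x₃ x₄)
        = B γ x₁ • wedge3 x₂ x₃ x₄ - B γ x₂ • wedge3 x₁ x₃ x₄
          + B γ x₃ • wedge3 x₁ x₂ x₄ - B γ x₄ • wedge3 x₁ x₂ x₃)
    -- ω_H-contraction of the form slot with the first H-variable of Λ⁴T
    (G1 : (E ⊗[ℂ] H) ⊗[ℂ] ExteriorAlgebra ℂ (E ⊗[ℂ] H) →ₗ[ℂ]
      E ⊗[ℂ] (E ⊗[ℂ] ExteriorAlgebra ℂ (E ⊗[ℂ] H)))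
    (hG1 : ∀ (a₀ a₁ a₂ a₃ a₄ : E) (c₀ c₁ c₂ c₃ c₄ : H),
      G1 ((a₀ ⊗ₜ c₀) ⊗ₜ wedge4 (a₁ ⊗ₜ c₁) (a₂ ⊗ₜ c₂) (a₃ ⊗ₜ c₃) (a₄ ⊗ₜ c₄))
        = ωH c₀ c₁ • (a₀ ⊗ₜ (a₁ ⊗ₜ wedge3 (a₂ ⊗ₜ c₂) (a₃ ⊗ₜ c₃) (a₄ ⊗ₜ c₄)))
        - ωH c₀ c₂ • (a₀ ⊗ₜ (a₂ ⊗ₜ wedge3 (a₁ ⊗ₜ c₁) (a₃ ⊗ₜ c₃) (a₄ ⊗ₜ c₄)))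
        + ωH c₀ c₃ • (a₀ ⊗ₜ (a₃ ⊗ₜ wedge3 (a₁ ⊗ₜ c₁) (a₂ ⊗ₜ c₂) (a₄ ⊗ₜ c₄)))
        - ωH c₀ c₄ • (a₀ ⊗ₜ (a₄ ⊗ₜ wedge3 (a₁ ⊗ₜ c₁) (a₂ ⊗ₜ c₂) (a₃ ⊗ₜ c₃))))
    -- expansion of Λ³T ⊂ HHH⊗EEE followed by total symmetrization in the H-variables
    (G2 : E ⊗[ℂ] (E ⊗[ℂ] ExteriorAlgebra ℂ (E ⊗[ℂ] H)) →ₗ[ℂ]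
      E ⊗[ℂ] (E ⊗[ℂ] ((H ⊗[ℂ] (H ⊗[ℂ] H)) ⊗[ℂ] (E ⊗[ℂ] (E ⊗[ℂ] E)))))
    (hG2 : ∀ (a a' b₁ b₂ b₃ : E) (d₁ d₂ d₃ : H),
      G2 (a ⊗ₜ (a' ⊗ₜ wedge3 (b₁ ⊗ₜ d₁) (b₂ ⊗ₜ d₂) (b₃ ⊗ₜ d₃)))
        = a ⊗ₜ (a' ⊗ₜ (sym3 d₁ d₂ d₃ ⊗ₜ alt3 b₁ b₂ b₃)))
    -- contraction with ω_E on the Λ³E-part, leaving the first two E-variables unchanged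
    (G3 : E ⊗[ℂ] (E ⊗[ℂ] ((H ⊗[ℂ] (H ⊗[ℂ] H)) ⊗[ℂ] (E ⊗[ℂ] (E ⊗[ℂ] E)))) →ₗ[ℂ]
      E ⊗[ℂ] (E ⊗[ℂ] ((H ⊗[ℂ] (H ⊗[ℂ] H)) ⊗[ℂ] E)))
    (hG3 : ∀ (a a' x y z : E) (u v w : H),
      G3 (a ⊗ₜ (a' ⊗ₜ ((u ⊗ₜ (v ⊗ₜ w)) ⊗ₜ (x ⊗ₜ (y ⊗ₜ z)))))
        = a ⊗ₜ (a' ⊗ₜ ((u ⊗ₜ (v ⊗ₜ w)) ⊗ₜ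
            (ωE x y • z - ωE x z • y + ωE y z • x))))
    -- projection to (S³H)Λ³E: total antisymmetrization of the three E-variables
    (G4 : E ⊗[ℂ] (E ⊗[ℂ] ((H ⊗[ℂ] (H ⊗[ℂ] H)) ⊗[ℂ] E)) →ₗ[ℂ]
      (H ⊗[ℂ] (H ⊗[ℂ] H)) ⊗[ℂ] (E ⊗[ℂ] (E ⊗[ℂ] E)))
    (hG4 : ∀ (a a' z : E) (u v w : H),
      G4 (a ⊗ₜ (a' ⊗ₜ ((u ⊗ₜ (v ⊗ₜ w)) ⊗ₜ z)))
        = (u ⊗ₜ (v ⊗ₜ w)) ⊗ₜ (((1:ℂ)/6) • alt3 a a' z))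
    :
    G4 (G3 (G2 (G1
        (Xi n e te h th B ic (te (Sum.inl ⟨0, by omega⟩) ⊗ₜ h)
          (alpha0 n hn e te h th)))))
      = (-(6*((n:ℂ)-1))/(4*n-3)) •
          ∑ i : Fin n ⊕ Fin n,
            (sym3 h h th ⊗ₜ alt3 (e i) (te i) (e (Sum.inl ⟨1, by omega⟩)))
        + (-(4*(4*(n:ℂ)^2-3*n+3))/(4*n-3)) •
            (sym3 h h th ⊗ₜ alt3 (e (Sum.inl ⟨0, by omega⟩))
              (e (Sum.inl ⟨1, by omega⟩)) (te (Sum.inl ⟨0, by omega⟩))) := by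
  obtain ⟨F, hFd⟩ : ∃ F : E → H → ExteriorAlgebra ℂ (E ⊗[ℂ] H) →ₗ[ℂ]
      (H ⊗[ℂ] (H ⊗[ℂ] H)) ⊗[ℂ] (E ⊗[ℂ] (E ⊗[ℂ] E)),
      ∀ a c t, G4 (G3 (G2 (G1 ((a ⊗ₜ c) ⊗ₜ t)))) = F a c t :=
    ⟨fun a c => G4 ∘ₗ G3 ∘ₗ G2 ∘ₗ G1 ∘ₗ TensorProduct.mk ℂ _ _ (a ⊗ₜ c), fun a c t => rfl⟩
  have hK := G34 ωE hωEskew G3 hG3 G4 hG4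
  have hc := core n hn ωE hωEskew ωH hωHskew e te hte1 hte2 hunit h th hH1 hH2 hH3 B hB ic hic F
    (fun u v w x y z => sym3 u v w ⊗ₜ alt3 x y z)
    (by
      intro a₀ a₁ a₂ a₃ a₄ c₀ c₁ c₂ c₃ c₄
      rw [← hFd, hG1]
      simp only [map_add, map_sub, map_smul, hG2, hK])
    (fun x y z => sym3 h h th ⊗ₜ alt3 x y z) rfl
    (by simp only [sym3_a h h th]) (by simp only [sym3_b h th h, sym3_a h h th])
    (by intro x y z; rw [alt3_swap12 x y z, TensorProduct.tmul_neg])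
    (by intro x y z; rw [alt3_swap23 x y z, TensorProduct.tmul_neg])
    (by intro x y z z'; rw [alt3_add3, TensorProduct.tmul_add])
    (by intro c x y z; rw [alt3_smul3, TensorProduct.tmul_smul])
  rw [← hc]
  simp only [Xi, map_sum, map_sub, hFd]
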